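/- Let ρ > 0, σ > 0, h(ξ) = ∫_ξ^∞ erfc(η) dη, φ_a(ξ) = (ρσ/2)·(√h(ξ/σ) − √h(−ξ/σ))², and define the annealed cumulant generating function per unit √t by M_a(λ) = sup_{ξ∈ℝ} (λξ − φ_a(ξ)). Then lim_{λ→0} ( M_a(λ) − σλ²/(2ρ√π) ) / λ⁴ = σ·(4/π − 1)/(8√π·ρ³). Equivalently, the fourth cumulant of the tracer position in the annealed setting is ⟨x(t)⁴⟩_c = (σ/ρ³)·(4/π − 1)·(3/√π)·√t. -/

import Mathlib

open MeasureTheory Real Filter Topology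

/-- The complementary error function `erfc(x) = (2/√π) ∫_x^∞ e^{−u²} du`. -/
noncomputable def erfc (x : ℝ) : ℝ := (2 / Real.sqrt π) * ∫ u in Set.Ioi x, Real.exp (-u ^ 2)

/-- `h(ξ) = ∫_ξ^∞ erfc(η) dη`. -/
noncomputable def hfun (ξ : ℝ) : ℝ := ∫ η in Set.Ioi ξ, erfc η

/-- The annealed large deviation function
`φ_a(ξ) = (ρσ/2)(√h(ξ/σ) − √h(−ξ/σ))²`. -/
noncomputable def φa (ρ σ ξ : ℝ) : ℝ :=
  (ρ * σ / 2) * (Real.sqrt (hfun (ξ / σ)) - Real.sqrt (hfun (-ξ / σ))) ^ 2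

/-- The annealed cumulant generating function per unit `√t`,
`M_a(λ) = sup_ξ (λξ − φ_a(ξ))`. -/
noncomputable def Ma (ρ σ l : ℝ) : ℝ := ⨆ ξ : ℝ, (l * ξ - φa ρ σ ξ)

/-!
By `h(-x) = h(x) + 2 x`, the rate `F = (√h(x) - √h(-x)) ^ 2` solves `F ^ 2 - 2 s F + 4 x ^ 2 = 0`
with `s = h(x) + h(-x)`, so `s = (2 / √π) (1 + x ^ 2) + o(x ^ 2)` gives
`F = √π x ^ 2 - √π (1 - π / 4) x ^ 4 + o(x ^ 4)`. The Legendre transform of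
`A x ^ 2 + B x ^ n + o(x ^ n)`, `n > 2`, is `l ^ 2 / (4 A) - B (l / (2 A)) ^ n + o(l ^ n)`: to this
order the correction is evaluated at the unperturbed maximizer `l / (2 A)`, because moving the
maximizer costs only at second order.
-/

section Asymptotics

open Asymptotics

lemma isLittleO_sub_const_mul_iff_tendsto_div {α : Type*} {F : Filter α} {g h : α → ℝ} (c : ℝ)
    (hne : ∀ᶠ x in F, h x ≠ 0) :
    (fun x => g x - c * h x) =o[F] h ↔ Tendsto (fun x => g x / h x) F (𝓝 c) := by
  rw [isLittleO_iff_tendsto' (hne.mono fun x hx h0 => absurd h0 hx),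
    ← tendsto_sub_nhds_zero_iff (x := c)]
  refine tendsto_congr' (f₁ := fun x => (g x - c * h x) / h x) (hne.mono fun x hx => ?_)
  field_simp

lemma eventually_pow_ne_zero (n : ℕ) : ∀ᶠ x : ℝ in 𝓝[≠] 0, x ^ n ≠ 0 :=
  eventually_mem_nhdsWithin.mono fun _ hx => pow_ne_zero n hx

lemma abs_pow_succ_isLittleO_pow (n : ℕ) :
    (fun l : ℝ => |l| ^ (n + 1)) =o[𝓝[≠] 0] fun l => l ^ n := by
  have h := (isLittleO_pow_pow (𝕜 := ℝ) n.lt_succ_self).mono (nhdsWithin_le_nhds (s := {0}ᶜ))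
  simpa only [norm_pow, Real.norm_eq_abs] using h.norm_left

lemma div_const_isBigO_self (c : ℝ) (F : Filter ℝ) : (fun l : ℝ => l / c) =O[F] fun l => l := by
  simpa only [div_eq_inv_mul] using isBigO_const_mul_self c⁻¹ (fun l : ℝ => l) F

end Asymptotics

section LegendreTransform

open Asymptotics

/-- The Legendre transform `l ↦ sup_x (l x - f x)` of a real function. As a supremum in `ℝ` it is
meaningful only at those `l` where `x ↦ l x - f x` is bounded above. -/
noncomputable def legendreTransform (f : ℝ → ℝ) (l : ℝ) : ℝ := ⨆ x, (l * x - f x)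

variable {f : ℝ → ℝ} {A B a b l x : ℝ} {n : ℕ}

lemma mul_abs_le_of_nonneg_mul_sub (hf : min (a * x ^ 2) (b * |x|) ≤ f x)
    (hl : |l| < b) (hx : 0 ≤ l * x - f x) : a * |x| ≤ |l| := by
  rcases eq_or_ne x 0 with rfl | hx0
  · simp
  have hxpos : 0 < |x| := abs_pos.2 hx0
  have hlx : min (a * x ^ 2) (b * |x|) ≤ |l| * |x| :=
    calc min (a * x ^ 2) (b * |x|) ≤ l * x := by linarith
      _ ≤ |l| * |x| := by rw [← abs_mul]; exact le_abs_self _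
  rcases min_le_iff.1 hlx with hquad | hlin
  · rw [← sq_abs, sq, ← mul_assoc] at hquad
    exact le_of_mul_le_mul_right hquad hxpos
  · exact absurd (le_of_mul_le_mul_right hlin hxpos) hl.not_ge

lemma bddAbove_range_mul_sub (ha : 0 < a) (hf : ∀ x, min (a * x ^ 2) (b * |x|) ≤ f x)
    (hl : |l| < b) : BddAbove (Set.range fun x => l * x - f x) := by
  refine ⟨|l| * (|l| / a), ?_⟩
  rintro _ ⟨x, rfl⟩
  rcases le_total 0 (l * x - f x) with hx | hx
  · have hb : 0 < b := (abs_nonneg l).trans_lt hl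
    have hfx : 0 ≤ f x := le_trans (by positivity) (hf x)
    have hxl : |x| ≤ |l| / a := by
      rw [le_div_iff₀' ha]
      exact mul_abs_le_of_nonneg_mul_sub (hf x) hl hx
    calc l * x - f x ≤ |l * x| := by linarith [le_abs_self (l * x)]
      _ = |l| * |x| := abs_mul l x
      _ ≤ |l| * (|l| / a) := by gcongr
  · exact hx.trans (by positivity)

lemma exists_nonneg_and_legendreTransform_le_add (h0 : f 0 = 0) (l : ℝ) {ε : ℝ} (hε : 0 < ε) :
    ∃ x, 0 ≤ l * x - f x ∧ legendreTransform f l ≤ l * x - f x + ε := by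
  obtain ⟨x, hx⟩ := exists_lt_of_lt_ciSup (sub_lt_self (legendreTransform f l) hε)
  rcases le_total 0 (l * x - f x) with hpos | hneg
  · exact ⟨x, hpos, by linarith⟩
  · exact ⟨0, by simp [h0], by simp only [mul_zero, h0]; linarith⟩

lemma mul_sub_mul_sq (hA : A ≠ 0) (l x : ℝ) :
    l * x - A * x ^ 2 = l ^ 2 / (4 * A) - A * (x - l / (2 * A)) ^ 2 := by
  field_simp
  ring

/-- By completing the square, near-maximality of `X l` bounds `A (X l - l / (2 A)) ^ 2` by
`O(l ^ n)`, which is `o(l ^ 2)`. -/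
lemma isEquivalent_of_nearMaximizer (hA : 0 < A) (hn : 2 < n)
    (hexp : (fun x => f x - A * x ^ 2) =O[𝓝 0] fun x => x ^ n)
    {X : ℝ → ℝ} (hXO : X =O[𝓝[≠] 0] fun l => l)
    (hX : ∀ᶠ l in 𝓝[≠] 0,
      l * (l / (2 * A)) - f (l / (2 * A)) ≤ l * X l - f (X l) + |l| ^ (n + 1)) :
    X ~[𝓝[≠] 0] fun l => l / (2 * A) := by
  have hlO : (fun l : ℝ => l) =O[𝓝[≠] 0] fun l => l / (2 * A) := by
    simpa only [div_eq_inv_mul] using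
      isBigO_self_const_mul (inv_ne_zero (by positivity : 2 * A ≠ 0)) (fun l : ℝ => l) _
  have hrem {Y : ℝ → ℝ} (hY : Y =O[𝓝[≠] 0] fun l => l) :
      (fun l => f (Y l) - A * Y l ^ 2) =O[𝓝[≠] 0] fun l => l ^ n :=
    (hexp.comp_tendsto (hY.trans_tendsto nhdsWithin_le_nhds)).trans (hY.pow n)
  have hsq : (fun l => (X l - l / (2 * A)) ^ 2) =O[𝓝[≠] 0] fun l => l ^ n := by
    refine IsBigO.trans (.of_bound' (hX.mono fun l hl => ?_))
      ((((hrem (div_const_isBigO_self (2 * A) _)).sub (hrem hXO)).add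
        (abs_pow_succ_isLittleO_pow n).isBigO).const_mul_left A⁻¹)
    rw [Real.norm_of_nonneg (sq_nonneg _)]
    refine le_trans ?_ (le_abs_self _)
    rw [le_inv_mul_iff₀ hA]
    have hXl := mul_sub_mul_sq hA.ne' l (X l)
    have hyl := mul_sub_mul_sq hA.ne' l (l / (2 * A))
    rw [sub_self] at hyl
    linarith
  have hsq' : (fun l => (X l - l / (2 * A)) ^ 2) =o[𝓝[≠] 0] fun l : ℝ => l ^ 2 :=
    hsq.trans_isLittleO ((isLittleO_pow_pow hn).mono nhdsWithin_le_nhds)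
  exact (hsq'.of_pow two_ne_zero).trans_isBigO hlO

lemma isLittleO_remainder_of_isEquivalent {c : ℝ}
    (hexp : (fun x => f x - A * x ^ 2 - B * x ^ n) =o[𝓝 0] fun x => x ^ n)
    {X : ℝ → ℝ} (hX : X ~[𝓝[≠] 0] fun l => l / c) :
    (fun l => f (X l) - A * X l ^ 2 - B * (l / c) ^ n) =o[𝓝[≠] 0] fun l => l ^ n := by
  have hyO := div_const_isBigO_self c (𝓝[≠] 0)
  have hXO := hX.isBigO.trans hyO
  have hf := (hexp.comp_tendsto (hXO.trans_tendsto nhdsWithin_le_nhds)).trans_isBigO (hXO.pow n)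
  have hpow := ((hX.pow n).isLittleO.trans_isBigO (hyO.pow n)).const_mul_left B
  refine (hf.add hpow).congr_left fun l => ?_
  simp only [Function.comp_apply, Pi.sub_apply, Pi.pow_apply]
  ring

lemma eventually_nhdsNE_zero_abs_lt (hb : 0 < b) : ∀ᶠ l : ℝ in 𝓝[≠] 0, |l| < b :=
  (continuous_abs.tendsto' (0 : ℝ) 0 abs_zero |>.eventually_lt_const hb).filter_mono
    nhdsWithin_le_nhds

lemma isBigO_self_of_nonneg_mul_sub (ha : 0 < a) (hb : 0 < b)
    (hf : ∀ x, min (a * x ^ 2) (b * |x|) ≤ f x) {X : ℝ → ℝ}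
    (hX : ∀ᶠ l in 𝓝[≠] 0, 0 ≤ l * X l - f (X l)) : X =O[𝓝[≠] 0] fun l => l := by
  refine .of_bound a⁻¹ ?_
  filter_upwards [hX, eventually_nhdsNE_zero_abs_lt hb] with l hXl hl
  rw [le_inv_mul_iff₀ ha]
  exact mul_abs_le_of_nonneg_mul_sub (hf _) hl hXl

/-- Completing the square at `x` only lowers `l x - f x`, so the quadratic error drops out of the
upper bound. -/
lemma abs_sub_sq_add_pow_le {M δ : ℝ} (hA : 0 < A) (hδ : 0 ≤ δ)
    (hlower : l * (l / (2 * A)) - f (l / (2 * A)) ≤ M) (hupper : M ≤ l * x - f x + δ) :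
    |M - l ^ 2 / (4 * A) + B * (l / (2 * A)) ^ n| ≤
      |f (l / (2 * A)) - A * (l / (2 * A)) ^ 2 - B * (l / (2 * A)) ^ n| +
        (|f x - A * x ^ 2 - B * (l / (2 * A)) ^ n| + δ) := by
  have hx := mul_sub_mul_sq hA.ne' l x
  have hy := mul_sub_mul_sq hA.ne' l (l / (2 * A))
  rw [sub_self] at hy
  have hsq : 0 ≤ A * (x - l / (2 * A)) ^ 2 := by positivity
  set ey := f (l / (2 * A)) - A * (l / (2 * A)) ^ 2 - B * (l / (2 * A)) ^ n
  set ex := f x - A * x ^ 2 - B * (l / (2 * A)) ^ n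
  refine abs_le.2 ⟨?_, ?_⟩
  · linarith [le_abs_self ey, abs_nonneg ex]
  · linarith [abs_nonneg ey, neg_abs_le ex]

/-- `M(l)` is squeezed between the values of `l x - f x` at `x = l / (2 A)` and, up to
`|l| ^ (n + 1)`, at a near-maximizer; both are `l ^ 2 / (4 A) - B (l / (2 A)) ^ n + o(l ^ n)`. -/
theorem legendreTransform_sub_sq_add_pow_isLittleO (hA : 0 < A) (ha : 0 < a) (hb : 0 < b)
    (hn : 2 < n) (hf : ∀ x, min (a * x ^ 2) (b * |x|) ≤ f x)
    (hexp : (fun x => f x - A * x ^ 2 - B * x ^ n) =o[𝓝 0] fun x => x ^ n) :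
    (fun l => legendreTransform f l - l ^ 2 / (4 * A) + B * (l / (2 * A)) ^ n)
      =o[𝓝[≠] 0] fun l => l ^ n := by
  have h0 : f 0 = 0 := by
    simpa [show n ≠ 0 by lia] using hexp.isBigO.eq_zero_imp.self_of_nhds
  have hne : ∀ᶠ l : ℝ in 𝓝[≠] 0, l ≠ 0 := self_mem_nhdsWithin
  choose! X hXnonneg hXmax using fun l (hl : l ≠ 0) =>
    exists_nonneg_and_legendreTransform_le_add h0 l (pow_pos (abs_pos.2 hl) (n + 1))
  have hlower : ∀ᶠ l in 𝓝[≠] 0,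
      l * (l / (2 * A)) - f (l / (2 * A)) ≤ legendreTransform f l :=
    (eventually_nhdsNE_zero_abs_lt hb).mono fun l hl =>
      le_ciSup (bddAbove_range_mul_sub ha hf hl) (l / (2 * A))
  have hX : X ~[𝓝[≠] 0] fun l => l / (2 * A) := by
    refine isEquivalent_of_nearMaximizer (f := f) hA hn ?_
      (isBigO_self_of_nonneg_mul_sub ha hb hf (hne.mono hXnonneg)) ?_
    · simpa using hexp.isBigO.add (isBigO_const_mul_self B (fun x : ℝ => x ^ n) (𝓝 0))
    · filter_upwards [hlower, hne] with l hl hl0 using hl.trans (hXmax l hl0)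
  have hbound := (isLittleO_remainder_of_isEquivalent hexp
    (IsEquivalent.refl (u := fun l => l / (2 * A)))).norm_left.add
      ((isLittleO_remainder_of_isEquivalent hexp hX).norm_left.add (abs_pow_succ_isLittleO_pow n))
  refine IsBigO.trans_isLittleO (.of_bound' ?_) hbound
  filter_upwards [hlower, hne] with l hl hl0
  exact (abs_sub_sq_add_pow_le hA (by positivity) hl (hXmax l hl0)).trans (le_abs_self _)

end LegendreTransform

lemma integrable_exp_neg_sq : Integrable fun u : ℝ => exp (-u ^ 2) := by
  simpa using integrable_exp_neg_mul_sq one_pos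

lemma integrable_mul_exp_neg_sq : Integrable fun u : ℝ => u * exp (-u ^ 2) := by
  simpa using integrable_mul_exp_neg_mul_sq one_pos

lemma tendsto_exp_neg_sq_atTop : Tendsto (fun u : ℝ => exp (-u ^ 2)) atTop (𝓝 0) :=
  tendsto_exp_neg_atTop_nhds_zero.comp (tendsto_pow_atTop two_ne_zero)

lemma hasDerivAt_exp_neg_sq (x : ℝ) :
    HasDerivAt (fun u : ℝ => exp (-u ^ 2)) (-(2 * x * exp (-x ^ 2))) x := by
  refine (hasDerivAt_pow 2 x).fun_neg.exp.congr_deriv ?_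
  push_cast
  ring

lemma erfc_nonneg (x : ℝ) : 0 ≤ erfc x :=
  mul_nonneg (by positivity) (integral_nonneg fun u => (exp_pos _).le)

lemma erfc_eq_one_sub (x : ℝ) : erfc x = 1 - 2 / √π * ∫ u in (0 : ℝ)..x, exp (-u ^ 2) := by
  have hhalf : ∫ u in Set.Ioi (0 : ℝ), exp (-u ^ 2) = √π / 2 := by
    simpa using integral_gaussian_Ioi 1
  have hsplit := intervalIntegral.integral_interval_add_Ioi (a := 0) (b := x)
    integrable_exp_neg_sq.integrableOn integrable_exp_neg_sq.integrableOn
  rw [erfc, ← sub_eq_of_eq_add' hsplit.symm, hhalf]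
  field_simp

lemma erfc_zero : erfc 0 = 1 := by simp [erfc_eq_one_sub]

lemma erfc_neg (x : ℝ) : erfc (-x) = 2 - erfc x := by
  have heven := intervalIntegral.integral_comp_neg (a := 0) (b := x) fun u : ℝ => exp (-u ^ 2)
  simp only [neg_sq, neg_zero] at heven
  rw [erfc_eq_one_sub, erfc_eq_one_sub, intervalIntegral.integral_symm, ← heven]
  ring

lemma hasDerivAt_erfc (x : ℝ) : HasDerivAt erfc (-(2 / √π * exp (-x ^ 2))) x := by
  have hcont : Continuous fun u : ℝ => exp (-u ^ 2) := by fun_prop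
  rw [funext erfc_eq_one_sub]
  exact ((hcont.integral_hasStrictDerivAt 0 x).hasDerivAt.const_mul _).const_sub 1

lemma integral_Ioi_mul_exp_neg_sq (x : ℝ) :
    ∫ u in Set.Ioi x, u * exp (-u ^ 2) = exp (-x ^ 2) / 2 := by
  have hderiv (u : ℝ) (_ : u ∈ Set.Ici x) :
      HasDerivAt (fun u : ℝ => -exp (-u ^ 2) / 2) (u * exp (-u ^ 2)) u :=
    ((hasDerivAt_exp_neg_sq u).fun_neg.div_const 2).congr_deriv (by ring)
  rw [integral_Ioi_of_hasDerivAt_of_tendsto' hderiv integrable_mul_exp_neg_sq.integrableOn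
    (by simpa using tendsto_exp_neg_sq_atTop.neg.div_const 2)]
  ring

lemma mul_erfc_le (x : ℝ) : x * erfc x ≤ exp (-x ^ 2) / √π := by
  have hmono : ∫ u in Set.Ioi x, x * exp (-u ^ 2) ≤ ∫ u in Set.Ioi x, u * exp (-u ^ 2) :=
    setIntegral_mono_on (integrable_exp_neg_sq.const_mul x).integrableOn
      integrable_mul_exp_neg_sq.integrableOn measurableSet_Ioi fun u hu => by gcongr; exact hu.le
  rw [integral_const_mul, integral_Ioi_mul_exp_neg_sq] at hmono
  calc x * erfc x = 2 / √π * (x * ∫ u in Set.Ioi x, exp (-u ^ 2)) := by rw [erfc]; ring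
    _ ≤ 2 / √π * (exp (-x ^ 2) / 2) := by gcongr
    _ = exp (-x ^ 2) / √π := by ring

lemma tendsto_mul_erfc_atTop : Tendsto (fun x => x * erfc x) atTop (𝓝 0) := by
  refine squeeze_zero' ?_ (.of_forall mul_erfc_le)
    (by simpa using tendsto_exp_neg_sq_atTop.div_const √π)
  filter_upwards [eventually_ge_atTop 0] with x hx using mul_nonneg hx (erfc_nonneg x)

lemma hasDerivAt_exp_neg_sq_div_sub_mul_erfc (x : ℝ) :
    HasDerivAt (fun u => exp (-u ^ 2) / √π - u * erfc u) (-erfc x) x :=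
  (((hasDerivAt_exp_neg_sq x).div_const √π).fun_sub
    ((hasDerivAt_id' x).fun_mul (hasDerivAt_erfc x))).congr_deriv (by ring)

lemma hfun_eq (x : ℝ) : hfun x = exp (-x ^ 2) / √π - x * erfc x := by
  have hlim : Tendsto (fun u => -(exp (-u ^ 2) / √π - u * erfc u)) atTop (𝓝 0) := by
    simpa using ((tendsto_exp_neg_sq_atTop.div_const √π).sub tendsto_mul_erfc_atTop).neg
  rw [hfun, integral_Ioi_of_hasDerivAt_of_nonneg'
    (fun u _ => by simpa using (hasDerivAt_exp_neg_sq_div_sub_mul_erfc u).fun_neg)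
    (fun u _ => erfc_nonneg u) hlim]
  ring

lemma hfun_nonneg (x : ℝ) : 0 ≤ hfun x := integral_nonneg erfc_nonneg

lemma hfun_zero : hfun 0 = 1 / √π := by simp [hfun_eq]

lemma hfun_neg (x : ℝ) : hfun (-x) = hfun x + 2 * x := by
  rw [hfun_eq, hfun_eq, erfc_neg, neg_sq]
  ring

lemma hasDerivAt_hfun (x : ℝ) : HasDerivAt hfun (-erfc x) x := by
  rw [funext hfun_eq]
  exact hasDerivAt_exp_neg_sq_div_sub_mul_erfc x

lemma continuous_hfun : Continuous hfun :=
  continuous_iff_continuousAt.2 fun x => (hasDerivAt_hfun x).continuousAt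

lemma antitone_hfun : Antitone hfun :=
  antitone_of_hasDerivAt_nonpos hasDerivAt_hfun fun x => neg_nonpos.2 (erfc_nonneg x)

lemma hfun_add_hfun_neg_le (x : ℝ) : hfun x + hfun (-x) ≤ 2 * (1 / √π + |x|) := by
  wlog hx : 0 ≤ x generalizing x
  · have h := this (-x) (by linarith)
    rwa [neg_neg, add_comm, abs_neg] at h
  · have h := antitone_hfun hx
    rw [hfun_zero] at h
    rw [hfun_neg, abs_of_nonneg hx]
    linarith

lemma tendsto_hfun_add_hfun_neg :
    Tendsto (fun x => hfun x + hfun (-x)) (𝓝[≠] 0) (𝓝 (2 / √π)) := by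
  have hcont : Continuous fun x => hfun x + hfun (-x) :=
    continuous_hfun.add (continuous_hfun.comp continuous_neg)
  convert (hcont.tendsto 0).mono_left nhdsWithin_le_nhds using 2
  rw [neg_zero, hfun_zero]
  ring

lemma tendsto_hfun_add_hfun_neg_sub_div_sq :
    Tendsto (fun x => (hfun x + hfun (-x) - 2 / √π) / x ^ 2) (𝓝[≠] 0) (𝓝 (2 / √π)) := by
  have herfc : Tendsto (slope erfc 0) (𝓝[≠] 0) (𝓝 (-(2 / √π))) := by
    simpa using (hasDerivAt_erfc 0).tendsto_slope
  have hneg_sq : Tendsto (fun x : ℝ => -x ^ 2) (𝓝[≠] 0) (𝓝[≠] 0) := by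
    refine tendsto_nhdsWithin_iff.2 ⟨?_, ?_⟩
    · exact ((by fun_prop : Continuous fun x : ℝ => -x ^ 2).tendsto' 0 0 (by simp)).mono_left
        nhdsWithin_le_nhds
    · filter_upwards [self_mem_nhdsWithin] with x hx
      simpa using hx
  have hexp : Tendsto (fun x => slope exp 0 (-x ^ 2)) (𝓝[≠] 0) (𝓝 1) := by
    simpa [Function.comp_def] using (hasDerivAt_exp 0).tendsto_slope.comp hneg_sq
  have hlim := (hexp.const_mul (-(2 / √π))).add (herfc.const_mul (-2))
  refine (hlim.congr' ?_).trans_eq (by ring_nf)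
  filter_upwards [self_mem_nhdsWithin] with x (hx : x ≠ 0)
  rw [hfun_eq, hfun_eq, erfc_neg, neg_sq]
  simp only [slope_def_field, exp_zero, erfc_zero]
  field_simp
  ring

/-- The annealed large deviation function in reduced units, without the factor `ρ σ / 2` and with
`ξ` measured in units of `σ`. -/
noncomputable def reducedRate (x : ℝ) : ℝ := (√(hfun x) - √(hfun (-x))) ^ 2

lemma φa_eq_reducedRate (ρ σ ξ : ℝ) : φa ρ σ ξ = ρ * σ / 2 * reducedRate (ξ / σ) := by
  rw [φa, reducedRate, neg_div]

lemma reducedRate_zero : reducedRate 0 = 0 := by simp [reducedRate]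

lemma reducedRate_mul_sq (x : ℝ) :
    reducedRate x * (√(hfun x) + √(hfun (-x))) ^ 2 = 4 * x ^ 2 := by
  have hx := sq_sqrt (hfun_nonneg x)
  have hnx := sq_sqrt (hfun_nonneg (-x))
  have hdiff : (√(hfun x) - √(hfun (-x))) * (√(hfun x) + √(hfun (-x))) = -(2 * x) := by
    linear_combination hx - hnx - hfun_neg x
  rw [reducedRate, ← mul_pow, hdiff]
  ring

/-- `reducedRate x` is the smaller root of `F ^ 2 - 2 s F + 4 x ^ 2` with `s = h(x) + h(-x)`, the
other one being `(√h(x) + √h(-x)) ^ 2`. -/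
lemma reducedRate_sq_add (x : ℝ) :
    reducedRate x ^ 2 + 4 * x ^ 2 = 2 * (hfun x + hfun (-x)) * reducedRate x := by
  have hx := sq_sqrt (hfun_nonneg x)
  have hnx := sq_sqrt (hfun_nonneg (-x))
  have hparallelogram :
      reducedRate x + (√(hfun x) + √(hfun (-x))) ^ 2 = 2 * (hfun x + hfun (-x)) := by
    rw [reducedRate]
    linear_combination 2 * hx + 2 * hnx
  linear_combination reducedRate x * hparallelogram - reducedRate_mul_sq x

lemma min_sq_abs_le_reducedRate (x : ℝ) : min (1 / 2 * x ^ 2) (1 / 2 * |x|) ≤ reducedRate x := by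
  have hx := sq_sqrt (hfun_nonneg x)
  have hnx := sq_sqrt (hfun_nonneg (-x))
  have hpi : 1 / √π ≤ 1 :=
    div_le_one_of_le₀ (one_le_sqrt.2 (by linarith [pi_gt_three])) (by positivity)
  have hrate : 0 ≤ reducedRate x := sq_nonneg _
  have hsum : (√(hfun x) + √(hfun (-x))) ^ 2 ≤ 4 * (1 + |x|) := by
    linarith [hfun_add_hfun_neg_le x, add_sq_le (a := √(hfun x)) (b := √(hfun (-x)))]
  have hlower : x ^ 2 ≤ reducedRate x * (1 + |x|) := by
    linarith [reducedRate_mul_sq x, mul_le_mul_of_nonneg_left hsum hrate]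
  rw [← sq_abs] at hlower ⊢
  rcases le_total |x| 1 with hle | hge
  · refine min_le_of_left_le ?_
    nlinarith
  · refine min_le_of_right_le ?_
    nlinarith

lemma tendsto_reducedRate_div_sq :
    Tendsto (fun x => reducedRate x / x ^ 2) (𝓝[≠] 0) (𝓝 √π) := by
  have hcont : Continuous fun x => (√(hfun x) + √(hfun (-x))) ^ 2 :=
    (continuous_hfun.sqrt.add (continuous_hfun.comp continuous_neg).sqrt).pow 2
  have hzero : (√(hfun 0) + √(hfun (-0))) ^ 2 = 4 / √π := by
    rw [neg_zero, ← two_mul, mul_pow, sq_sqrt (hfun_nonneg 0), hfun_zero]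
    ring
  have hlim := (hcont.tendsto' 0 _ hzero).mono_left (nhdsWithin_le_nhds (s := {0}ᶜ))
  refine (((tendsto_const_nhds (x := 4)).div hlim (by positivity)).congr' ?_).trans_eq (by simp)
  filter_upwards [self_mem_nhdsWithin] with x (hx : x ≠ 0)
  have hprod := reducedRate_mul_sq x
  have hne : (√(hfun x) + √(hfun (-x))) ^ 2 ≠ 0 :=
    right_ne_zero_of_mul (hprod.trans_ne (by positivity))
  rw [Pi.div_apply, div_eq_div_iff hne (by positivity), hprod]

/-- The quadratic equation in the form `F = 2 x ^ 2 / s + F ^ 2 / (2 s)` upgrades `F ~ √π x ^ 2` to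
the next order. -/
lemma tendsto_reducedRate_sub_div_pow_four :
    Tendsto (fun x => (reducedRate x - √π * x ^ 2) / x ^ 4) (𝓝[≠] 0) (𝓝 (-√π * (1 - π / 4))) := by
  have hsum := tendsto_hfun_add_hfun_neg
  have hlim := ((tendsto_hfun_add_hfun_neg_sub_div_sq.const_mul (-√π)).add
    ((tendsto_reducedRate_div_sq.pow 2).div_const 2)).div hsum (by positivity)
  refine (hlim.congr' ?_).trans_eq ?_
  · filter_upwards [self_mem_nhdsWithin, hsum.eventually_ne (by positivity)] with x (hx : x ≠ 0) hs
    have hquad := reducedRate_sq_add x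
    simp only [Pi.div_apply]
    field_simp
    linear_combination hquad
  · congr 1
    rw [sq_sqrt pi_pos.le]
    field_simp
    ring

section Expansion

open Asymptotics

lemma reducedRate_isLittleO :
    (fun x => reducedRate x - √π * x ^ 2 - -√π * (1 - π / 4) * x ^ 4) =o[𝓝 0] fun x => x ^ 4 := by
  have hpunctured := (isLittleO_sub_const_mul_iff_tendsto_div _ (eventually_pow_ne_zero 4)).2
    tendsto_reducedRate_sub_div_pow_four
  rw [← nhdsWithin_univ, ← Set.union_compl_self {0}, ← Set.insert_eq]
  exact hpunctured.insert (by simp [reducedRate_zero])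

lemma φa_isLittleO (ρ : ℝ) {σ : ℝ} (hσ : σ ≠ 0) :
    (fun ξ => φa ρ σ ξ - ρ * √π / (2 * σ) * ξ ^ 2 - -(ρ * √π * (1 - π / 4) / (2 * σ ^ 3)) * ξ ^ 4)
      =o[𝓝 0] fun ξ => ξ ^ 4 := by
  have hscale : Tendsto (fun ξ : ℝ => ξ / σ) (𝓝 0) (𝓝 0) :=
    (continuous_id.div_const σ).tendsto' 0 0 (zero_div σ)
  have hreduced := ((reducedRate_isLittleO.comp_tendsto hscale).const_mul_left
    (ρ * σ / 2)).trans_isBigO ((div_const_isBigO_self σ (𝓝 0)).pow 4)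
  refine hreduced.congr_left fun ξ => ?_
  simp only [Function.comp_apply, φa_eq_reducedRate]
  field_simp

lemma min_sq_abs_le_φa {ρ σ : ℝ} (hρ : 0 < ρ) (hσ : 0 < σ) (ξ : ℝ) :
    min (ρ / (4 * σ) * ξ ^ 2) (ρ / 4 * |ξ|) ≤ φa ρ σ ξ :=
  calc min (ρ / (4 * σ) * ξ ^ 2) (ρ / 4 * |ξ|)
      = ρ * σ / 2 * min (1 / 2 * (ξ / σ) ^ 2) (1 / 2 * |ξ / σ|) := by
        rw [mul_min_of_nonneg _ _ (by positivity), abs_div, abs_of_pos hσ]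
        congr 1 <;> field_simp <;> ring
    _ ≤ φa ρ σ ξ := by
        rw [φa_eq_reducedRate]
        gcongr
        exact min_sq_abs_le_reducedRate _

lemma Ma_eq_legendreTransform (ρ σ : ℝ) : Ma ρ σ = legendreTransform (φa ρ σ) := rfl

lemma Ma_isLittleO {ρ σ : ℝ} (hρ : 0 < ρ) (hσ : 0 < σ) :
    (fun l => Ma ρ σ l - σ * l ^ 2 / (2 * ρ * √π) - σ * (4 / π - 1) / (8 * √π * ρ ^ 3) * l ^ 4)
      =o[𝓝[≠] 0] fun l => l ^ 4 := by
  have hM := legendreTransform_sub_sq_add_pow_isLittleO (A := ρ * √π / (2 * σ))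
    (by positivity) (by positivity) (by positivity) (by norm_num)
    (min_sq_abs_le_φa hρ hσ) (φa_isLittleO ρ hσ.ne')
  refine hM.congr_left fun l => ?_
  have hpi : √π ^ 2 = π := sq_sqrt pi_pos.le
  have hquadratic : l ^ 2 / (4 * (ρ * √π / (2 * σ))) = σ * l ^ 2 / (2 * ρ * √π) := by
    field_simp
    norm_num
  have hquartic : -(ρ * √π * (1 - π / 4) / (2 * σ ^ 3)) * (l / (2 * (ρ * √π / (2 * σ)))) ^ 4
      = -(σ * (4 / π - 1) / (8 * √π * ρ ^ 3) * l ^ 4) := by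
    field_simp
    rw [hpi]
    ring
  rw [Ma_eq_legendreTransform, hquadratic, hquartic, ← sub_eq_add_neg]

end Expansion

/-- `lim_{λ→0} (M_a(λ) − σλ²/(2ρ√π))/λ⁴ = σ(4/π − 1)/(8√π ρ³)`: the fourth annealed
cumulant of the tracer position is `(σ/ρ³)(4/π − 1)(3/√π)√t`. -/
theorem annealed_fourth_cumulant (ρ σ : ℝ) (hρ : 0 < ρ) (hσ : 0 < σ) :
    Tendsto (fun l : ℝ =>
        (Ma ρ σ l - σ * l ^ 2 / (2 * ρ * Real.sqrt π)) / l ^ 4)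
      (𝓝[≠] 0) (nhds (σ * (4 / π - 1) / (8 * Real.sqrt π * ρ ^ 3))) := by
  exact (isLittleO_sub_const_mul_iff_tendsto_div _ (eventually_pow_ne_zero 4)).1
    (Ma_isLittleO hρ hσ)
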